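/- Let S be a finite set of prime numbers and let n ≥ 2 be a fixed integer. There are only finitely many triples (x, y, z) with z a nonzero integer, x and y S-units, gcd(x, y) nth-power free, and x + y = z^n. -/

import Mathlib

/-- An `S`-unit: a nonzero integer all of whose prime divisors belong to `S`. -/
def IsSUnit (S : Finset ℕ) (x : ℤ) : Prop :=
  x ≠ 0 ∧ ∀ p : ℕ, p.Prime → (p : ℤ) ∣ x → p ∈ S

/-- A natural number is `n`th-power free if no `n`th power of a prime divides it. -/
def NthPowerFree (n d : ℕ) : Prop :=
  ∀ p : ℕ, p.Prime → ¬ p ^ n ∣ d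

/-!
The Thue–Siegel method with hypergeometric (Padé) approximants. Suppose `x₁ + y₁ = z₁ ^ n` and
`x₂ + y₂ = z₂ ^ n` with `|yᵢ| ≤ |xᵢ|` and `yᵢ = b * vᵢ ^ n` for the same `b`, the second solution
being much larger than the first. At a prime `p` of `S` with `p ^ n ∣ xᵢ` the number `x₂ / y₂` is
`p`-adically tiny, so that `z₁ v₂ / (v₁ z₂)` is `p`-adically close to `(1 + x₁ / y₁) ^ (1 / n)`,
which is also approximated by the Padé approximant `P / Q` of `(1 + X) ^ (1 / n)` at `x₁ / y₁`.
Hence the integer obtained from `Q z₁ v₂ - P v₁ z₂` by homogenization is divisible by a high power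
of `p`. At the other primes of `S` it is divisible by a high power because `y₁` and `v₂` are. As a
real number, however, it is too small for this, so it vanishes. But consecutive approximants are
linearly independent and cannot both give `0`. An infinite set of solutions contains a pair to
which this applies, since the exponents at the primes of `S`, relative to the heights, lie in a
compact set.
-/

open Finset

section GeneralizedBinomial

variable {R : Type*} [CommRing R]

lemma descPochhammer_smeval_eq_prod_range (a : R) (j : ℕ) :
    (descPochhammer ℤ j).smeval a = ∏ i ∈ range j, (a - i) := by
  induction j with
  | zero => simp
  | succ j ih =>
    rw [descPochhammer_succ_right, Polynomial.smeval_mul, ih, prod_range_succ]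
    simp [Polynomial.smeval_sub, Polynomial.smeval_natCast]

lemma factorial_mul_choose_eq_prod_range [BinomialRing R] (a : R) (j : ℕ) :
    (j.factorial : R) * Ring.choose a j = ∏ i ∈ range j, (a - i) := by
  rw [← descPochhammer_smeval_eq_prod_range, Ring.descPochhammer_eq_factorial_smul_choose,
    nsmul_eq_mul]

variable {K : Type*} [Field K] [BinomialRing K]

lemma choose_eq_prod_range_div [CharZero K] (a : K) (j : ℕ) :
    Ring.choose a j = (∏ i ∈ range j, (a - i)) / j.factorial := by
  rw [eq_div_iff (by exact_mod_cast j.factorial_ne_zero), mul_comm,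
    factorial_mul_choose_eq_prod_range]

lemma choose_ne_zero_of_forall_ne_natCast [CharZero K] {a : K} (ha : ∀ i : ℕ, a ≠ i) (j : ℕ) :
    Ring.choose a j ≠ 0 := by
  rw [choose_eq_prod_range_div]
  exact div_ne_zero (prod_ne_zero_iff.2 fun i _ ↦ sub_ne_zero.2 (ha i))
    (by exact_mod_cast j.factorial_ne_zero)

lemma abs_choose_le_two_pow [LinearOrder K] [IsStrictOrderedRing K] {a : K} {M : ℕ}
    (ha : |a| ≤ M + 1) (j : ℕ) : |Ring.choose a j| ≤ 2 ^ (M + j) := by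
  rw [choose_eq_prod_range_div, abs_div, abs_prod, Nat.abs_cast, div_le_iff₀ (by positivity)]
  calc ∏ i ∈ range j, |a - i|
      ≤ ∏ i ∈ range j, ((M + 1 + i : ℕ) : K) := by
        refine prod_le_prod (fun _ _ ↦ abs_nonneg _) fun i _ ↦ ?_
        push_cast
        linarith [abs_sub a (i : K), Nat.abs_cast (R := K) i]
    _ = (((M + j).choose j * j.factorial : ℕ) : K) := by
        rw [← Nat.cast_prod, ← Nat.ascFactorial_eq_prod_range,
          Nat.ascFactorial_eq_factorial_mul_choose, mul_comm]
    _ ≤ 2 ^ (M + j) * j.factorial := by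
        push_cast
        gcongr
        exact_mod_cast Nat.choose_le_two_pow _ _

/- Modulo `m` the factor `n` has an inverse `u`, which turns the product into one of consecutive
integers, a multiple of `j !`. -/
lemma dvd_prod_range_sub_mul_of_isCoprime {m n : ℤ} (hmn : IsCoprime m n) {j : ℕ}
    (hm : m ∣ j.factorial) (a : ℤ) : m ∣ ∏ i ∈ range j, (a - n * i) := by
  obtain ⟨w, u, huw⟩ := hmn
  have hu : IsCoprime m (u ^ j) := IsCoprime.pow_right ⟨w, n, by linarith⟩
  refine hu.dvd_of_dvd_mul_left ?_
  have hmod : u ^ j * ∏ i ∈ range j, (a - n * i) ≡ ∏ i ∈ range j, (u * a - i) [ZMOD m] := by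
    have hprod := pow_card_mul_prod (s := range j) (b := u) (f := fun i ↦ a - n * i)
    rw [card_range] at hprod
    rw [hprod]
    refine Int.ModEq.prod fun i _ ↦ Int.modEq_iff_dvd.2 ⟨-(w * i), ?_⟩
    linear_combination i * huw
  rw [Int.ModEq.dvd_iff hmod]
  have h := factorial_mul_choose_eq_prod_range (u * a) j
  exact hm.trans ⟨_, h.symm⟩

lemma le_of_prime_pow_dvd_factorial {p e j : ℕ} (hp : p.Prime) (h : p ^ e ∣ j.factorial) :
    e ≤ j := by
  have := Fact.mk hp
  have he := (padicValNat_dvd_iff_le (Nat.factorial_ne_zero j)).1 h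
  have hlegendre := sub_one_mul_padicValNat_factorial (p := p) j
  have := Nat.le_mul_of_pos_left (padicValNat p j.factorial) (Nat.sub_pos_of_lt hp.one_lt)
  omega

lemma factorial_dvd_pow_mul_prod_range_sub_mul (n : ℕ) (a : ℤ) (j : ℕ) :
    (j.factorial : ℤ) ∣ (n : ℤ) ^ j * ∏ i ∈ range j, (a - n * i) := by
  rw [Int.natCast_dvd, Nat.dvd_iff_prime_pow_dvd_dvd]
  intro p e hp hpe
  rw [← Int.natCast_dvd]
  by_cases hpn : p ∣ n
  · have : p ^ e ∣ n ^ j :=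
      (pow_dvd_pow p (le_of_prime_pow_dvd_factorial hp hpe)).trans (pow_dvd_pow_of_dvd hpn j)
    exact Dvd.dvd.mul_right (by exact_mod_cast this) _
  · have hcop : (p ^ e).Coprime n := Nat.Coprime.pow_left e (hp.coprime_iff_not_dvd.2 hpn)
    exact Dvd.dvd.mul_left (dvd_prod_range_sub_mul_of_isCoprime
      (Nat.isCoprime_iff_coprime.2 hcop) (by exact_mod_cast hpe) a) _

/-- The integer `n ^ (2 * j) * Ring.choose (a / n) j`, a generalized binomial coefficient cleared of
denominators. The division in the definition is exact. -/
def scaledChoose (n : ℕ) (a : ℤ) (j : ℕ) : ℤ :=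
  (n ^ j * ∏ i ∈ range j, (a - n * i)) / j.factorial

lemma cast_scaledChoose [CharZero K] {n : ℕ} (hn : n ≠ 0) (a : ℤ) (j : ℕ) :
    (scaledChoose n a j : K) = n ^ (2 * j) * Ring.choose ((a : K) / n) j := by
  have hn' : (n : K) ≠ 0 := by exact_mod_cast hn
  have hprod : ∏ i ∈ range j, ((a : K) - n * i) = n ^ j * ∏ i ∈ range j, ((a : K) / n - i) := by
    have hprod := pow_card_mul_prod (s := range j) (b := (n : K)) (f := fun i ↦ (a : K) / n - i)
    rw [card_range] at hprod
    rw [hprod]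
    exact prod_congr rfl fun i _ ↦ by field_simp
  rw [scaledChoose, Int.cast_div (factorial_dvd_pow_mul_prod_range_sub_mul n a j)
    (by exact_mod_cast j.factorial_ne_zero), choose_eq_prod_range_div]
  push_cast
  rw [hprod]
  ring

end GeneralizedBinomial

section Polynomial

open Polynomial

variable {R : Type*} [CommRing R]

lemma X_pow_dvd_coe_iff {P : R[X]} {N : ℕ} :
    (PowerSeries.X : PowerSeries R) ^ N ∣ P ↔ X ^ N ∣ P := by
  simp only [PowerSeries.X_pow_dvd_iff, coeff_coe, X_pow_dvd_iff]

lemma X_pow_dvd_map_iff {A : Type*} [CommRing A] {f : R →+* A} (hf : Function.Injective f)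
    {P : R[X]} {N : ℕ} : X ^ N ∣ P.map f ↔ X ^ N ∣ P := by
  simp only [X_pow_dvd_iff, coeff_map, map_eq_zero_iff f hf]

lemma X_pow_dvd_sub_of_X_pow_dvd_pow_sub_pow [IsDomain R] [CharZero R] {A B : R[X]} {n N : ℕ}
    (hn : n ≠ 0) (hAB : A.eval 0 = B.eval 0) (hB : B.eval 0 ≠ 0) (h : X ^ N ∣ A ^ n - B ^ n) :
    X ^ N ∣ A - B := by
  rw [← Commute.mul_geom_sum₂ (Commute.all _ _)] at h
  refine Prime.pow_dvd_of_dvd_mul_right prime_X _ ?_ h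
  rw [X_dvd_iff, coeff_zero_eq_eval_zero, eval_finsetSum]
  simp only [eval_mul, eval_pow, hAB]
  rw [geom_sum₂_self]
  exact mul_ne_zero (by exact_mod_cast hn) (pow_ne_zero _ hB)

end Polynomial

section PadeApproximants

open Polynomial

variable {R : Type*} [CommRing R] [BinomialRing R]

lemma natCast_choose_mul_choose_eq_coeff (α : R) (c j : ℕ) :
    (j.choose c : R) * Ring.choose α j = Ring.choose α c *
      PowerSeries.coeff j (PowerSeries.X ^ c * PowerSeries.binomialSeries R (α - c)) := by
  rw [PowerSeries.coeff_X_pow_mul']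
  split_ifs with h
  · rw [PowerSeries.binomialSeries_coeff, smul_eq_mul, mul_one, ← nsmul_eq_mul,
      Ring.choose_smul_choose α h]
  · rw [Nat.choose_eq_zero_of_lt (not_le.1 h), Nat.cast_zero, zero_mul, mul_zero]

lemma sum_antidiagonal_choose_mul_natCast_choose_mul_choose (α β : R) (c m : ℕ) :
    ∑ ij ∈ antidiagonal m, Ring.choose β ij.1 * ((ij.2.choose c : R) * Ring.choose α ij.2) =
      Ring.choose α c * if c ≤ m then Ring.choose (β + (α - c)) (m - c) else 0 := by
  simp_rw [natCast_choose_mul_choose_eq_coeff, mul_left_comm _ (Ring.choose α c), ← mul_sum]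
  congr 1
  calc ∑ ij ∈ antidiagonal m, Ring.choose β ij.1 *
        PowerSeries.coeff ij.2 (PowerSeries.X ^ c * PowerSeries.binomialSeries R (α - c))
      = PowerSeries.coeff m (PowerSeries.binomialSeries R β *
          (PowerSeries.X ^ c * PowerSeries.binomialSeries R (α - c))) := by
        simp [PowerSeries.coeff_mul]
    _ = PowerSeries.coeff m
          (PowerSeries.X ^ c * PowerSeries.binomialSeries R (β + (α - c))) := by
        rw [PowerSeries.binomialSeries_add, mul_left_comm]
    _ = if c ≤ m then Ring.choose (β + (α - c)) (m - c) else 0 := by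
        simp [PowerSeries.coeff_X_pow_mul', -PowerSeries.binomialSeries_add]

lemma choose_sub_mul_choose_sub_sub {k l m c : ℕ} (hm : m ≤ k + l) (hck : c ≤ k) (hcm : c ≤ m) :
    (k + l - m).choose (k - c) * (k - c).choose (m - c) =
      (k + l - m).choose l * l.choose (m - c) := by
  obtain hmk | hkm := le_or_gt m k
  · rw [Nat.choose_symm_of_eq_add (show k - c = (m - c) + (k - m) by omega),
      Nat.choose_mul (by omega), Nat.choose_symm_of_eq_add (show k + l - m = (k - m) + l by omega)]
    congr 2 <;> omega
  · rw [Nat.choose_eq_zero_of_lt (show k - c < m - c by omega),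
      Nat.choose_eq_zero_of_lt (show k + l - m < l by omega), mul_zero, zero_mul]

lemma sum_antidiagonal_choose_mul_choose_eq_sum_range (α β : R) {k l m : ℕ} (hm : m ≤ k + l) :
    ∑ ij ∈ antidiagonal m, ((l + k - ij.1).choose k : R) * Ring.choose β ij.1 *
        Ring.choose α ij.2 =
      ∑ c ∈ range (k + 1), ((k + l - m).choose (k - c) : R) *
        (Ring.choose α c * if c ≤ m then Ring.choose (β + (α - c)) (m - c) else 0) := by
  have hvandermonde : ∀ ij ∈ antidiagonal m,
      ((l + k - ij.1).choose k : R) * Ring.choose β ij.1 * Ring.choose α ij.2 =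
        ∑ c ∈ range (k + 1), ((k + l - m).choose (k - c) : R) *
          (Ring.choose β ij.1 * (ij.2.choose c * Ring.choose α ij.2)) := by
    intro ij hij
    rw [HasAntidiagonal.mem_antidiagonal] at hij
    rw [show l + k - ij.1 = ij.2 + (k + l - m) by omega, Nat.add_choose_eq,
      Nat.sum_antidiagonal_eq_sum_range_succ_mk]
    push_cast
    rw [sum_mul, sum_mul]
    exact sum_congr rfl fun _ _ ↦ by ring
  rw [sum_congr rfl hvandermonde, sum_comm]
  simp_rw [← mul_sum, sum_antidiagonal_choose_mul_natCast_choose_mul_choose]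

lemma sum_antidiagonal_choose_mul_choose_mul_choose (α : R) {k l m : ℕ} (hm : m ≤ k + l) :
    ∑ ij ∈ antidiagonal m,
      ((l + k - ij.1).choose k : R) * Ring.choose (-α + k) ij.1 * Ring.choose α ij.2 =
      (k + l - m).choose l * Ring.choose (α + l) m := by
  have hterm : ∀ c ∈ range (k + 1), ((k + l - m).choose (k - c) : R) *
      (Ring.choose α c * if c ≤ m then Ring.choose (-α + k + (α - c)) (m - c) else 0) =
        if c ≤ m then (k + l - m).choose l * (Ring.choose α c * (l.choose (m - c) : R)) else 0 := by
    intro c hc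
    rw [mem_range, Nat.lt_succ_iff] at hc
    split_ifs with hcm
    · rw [show -α + k + (α - c) = ((k - c : ℕ) : R) by push_cast [hc]; ring, Ring.choose_natCast]
      have := congrArg (Nat.cast (R := R)) (choose_sub_mul_choose_sub_sub hm hc hcm)
      push_cast at this
      linear_combination Ring.choose α c * this
    · rw [mul_zero, mul_zero]
  rw [sum_antidiagonal_choose_mul_choose_eq_sum_range α _ hm, sum_congr rfl hterm, ← sum_filter,
    Ring.add_choose_eq m (Commute.all α (l : R)), mul_sum,
    Nat.sum_antidiagonal_eq_sum_range_succ_mk]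
  simp only [Ring.choose_natCast]
  refine sum_subset (fun c hc ↦ ?_) fun c hc hc' ↦ ?_
  · simp only [mem_filter, mem_range] at hc ⊢
    omega
  · simp only [mem_filter, mem_range] at hc hc'
    rw [Nat.choose_eq_zero_of_lt (show k + l - m < l by omega), Nat.cast_zero, zero_mul]

/-- The numerator of the `(k, l)` Padé approximant, of degree `k` over `l`, of the binomial series
`(1 + X) ^ α`. Since `(1 + X) ^ (-α)` has the inverse approximant, the denominator is
`padeNum (-α) l k`; no separate definition is made for it. -/
noncomputable def padeNum (α : R) (k l : ℕ) : R[X] :=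
  ∑ j ∈ range (k + 1), monomial j ((k + l - j).choose l * Ring.choose (α + l) j)

lemma coeff_padeNum (α : R) {k l j : ℕ} (hj : j ≤ k + l) :
    (padeNum α k l).coeff j = (k + l - j).choose l * Ring.choose (α + l) j := by
  rw [padeNum, finsetSum_coeff]
  simp only [coeff_monomial, sum_ite_eq', mem_range, Nat.lt_succ_iff, ite_eq_left_iff, not_le]
  intro hkj
  rw [Nat.choose_eq_zero_of_lt (show k + l - j < l by omega), Nat.cast_zero, zero_mul]

lemma coeff_padeNum_eq_zero (α : R) {k l j : ℕ} (hj : k < j) : (padeNum α k l).coeff j = 0 := by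
  rw [padeNum, finsetSum_coeff]
  exact sum_eq_zero fun _ hi ↦ coeff_monomial_of_ne _ (by rw [mem_range] at hi; omega)

lemma natDegree_padeNum_le (α : R) (k l : ℕ) : (padeNum α k l).natDegree ≤ k :=
  natDegree_le_iff_coeff_eq_zero.2 fun _ ↦ coeff_padeNum_eq_zero α

lemma eval_zero_padeNum (α : R) (k l : ℕ) : (padeNum α k l).eval 0 = (k + l).choose l := by
  simp [← coeff_zero_eq_eval_zero, coeff_padeNum]

theorem X_pow_dvd_padeNum_mul_binomialSeries_sub (α : R) (k l : ℕ) :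
    (PowerSeries.X : PowerSeries R) ^ (k + l + 1) ∣
      (padeNum (-α) l k : PowerSeries R) * PowerSeries.binomialSeries R α - padeNum α k l := by
  rw [PowerSeries.X_pow_dvd_iff]
  intro m hm
  rw [map_sub, PowerSeries.coeff_mul, coeff_coe, coeff_padeNum α (Nat.lt_succ_iff.1 hm),
    sub_eq_zero, ← sum_antidiagonal_choose_mul_choose_mul_choose α (Nat.lt_succ_iff.1 hm)]
  refine sum_congr rfl fun ij hij ↦ ?_
  rw [HasAntidiagonal.mem_antidiagonal] at hij
  rw [coeff_coe, coeff_padeNum _ (by omega), PowerSeries.binomialSeries_coeff, smul_eq_mul,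
    mul_one]

lemma X_pow_dvd_padeNum_mul_padeNum_sub (α : R) (k l : ℕ) :
    X ^ (k + l + 1) ∣
      padeNum α k l * padeNum (-α) (l + 1) k - padeNum α k (l + 1) * padeNum (-α) l k := by
  rw [← X_pow_dvd_coe_iff]
  set f := PowerSeries.binomialSeries R α
  have hcombine : ((padeNum α k l * padeNum (-α) (l + 1) k -
        padeNum α k (l + 1) * padeNum (-α) l k : R[X]) : PowerSeries R) =
      padeNum (-α) l k * (padeNum (-α) (l + 1) k * f - padeNum α k (l + 1)) -
        padeNum (-α) (l + 1) k * (padeNum (-α) l k * f - padeNum α k l) := by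
    push_cast
    ring
  rw [hcombine]
  exact dvd_sub
    (((pow_dvd_pow _ (by omega)).trans
      (X_pow_dvd_padeNum_mul_binomialSeries_sub α k (l + 1))).mul_left _)
    ((X_pow_dvd_padeNum_mul_binomialSeries_sub α k l).mul_left _)

/- The degree is at most `k + l + 1`, so only the leading coefficient survives. -/
theorem padeNum_mul_padeNum_sub_eq_C_mul_X_pow (α : R) (k l : ℕ) :
    padeNum α k l * padeNum (-α) (l + 1) k - padeNum α k (l + 1) * padeNum (-α) l k =
      C (Ring.choose (α + l) k * Ring.choose (-α + k) (l + 1)) * X ^ (k + l + 1) := by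
  have hdeg₁ := natDegree_mul_le_of_le (natDegree_padeNum_le α k l)
    (natDegree_padeNum_le (-α) (l + 1) k)
  have hdeg₂ := natDegree_mul_le_of_le (natDegree_padeNum_le α k (l + 1))
    (natDegree_padeNum_le (-α) l k)
  have htop := coeff_mul_add_eq_of_natDegree_le (natDegree_padeNum_le α k l)
    (natDegree_padeNum_le (-α) (l + 1) k)
  ext m
  rw [coeff_C_mul_X_pow]
  obtain hm | rfl | hm := lt_trichotomy m (k + l + 1)
  · rw [X_pow_dvd_iff.1 (X_pow_dvd_padeNum_mul_padeNum_sub α k l) m hm, if_neg hm.ne]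
  · rw [if_pos rfl, coeff_sub, coeff_eq_zero_of_natDegree_lt (hdeg₂.trans_lt (k + l).lt_succ_self),
      sub_zero, add_assoc, htop, coeff_padeNum _ (by omega), coeff_padeNum _ (by omega)]
    simp
  · rw [if_neg hm.ne', coeff_sub, coeff_eq_zero_of_natDegree_lt (by omega),
      coeff_eq_zero_of_natDegree_lt (by omega), sub_zero]

lemma binomialSeries_pow (α : R) (n : ℕ) :
    PowerSeries.binomialSeries R α ^ n = PowerSeries.binomialSeries R (n * α) := by
  induction n with
  | zero => simp
  | succ n ih =>
    rw [pow_succ, ih, ← PowerSeries.binomialSeries_add, Nat.cast_succ, add_one_mul]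

lemma X_pow_dvd_padeNum_pow_mul_sub {α : R} {n : ℕ} (hα : n * α = 1) (k l : ℕ) :
    X ^ (k + l + 1) ∣ padeNum (-α) l k ^ n * (1 + X) - padeNum α k l ^ n := by
  have hroot : PowerSeries.binomialSeries R α ^ n = 1 + PowerSeries.X := by
    rw [binomialSeries_pow, hα, ← Nat.cast_one, PowerSeries.binomialSeries_nat, pow_one]
  rw [← X_pow_dvd_coe_iff]
  push_cast
  rw [← hroot, ← mul_pow]
  exact (X_pow_dvd_padeNum_mul_binomialSeries_sub α k l).trans (sub_dvd_pow_sub_pow _ _ _)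

/- Substituting `(1 + X) ^ n - 1` for `X` turns the binomial series `(1 + X) ^ (1 / n)` into the
polynomial `1 + X`, which can be evaluated in every commutative ring. -/
theorem X_pow_dvd_padeNum_comp_mul_sub [IsDomain R] [CharZero R] {α : R} {n : ℕ}
    (hα : n * α = 1) (k l : ℕ) :
    X ^ (k + l + 1) ∣
      (padeNum (-α) l k).comp ((1 + X) ^ n - 1) * (1 + X) -
        (padeNum α k l).comp ((1 + X) ^ n - 1) := by
  have hn : n ≠ 0 := by
    rintro rfl
    simp at hα
  have hX : (X : R[X]) ∣ (1 + X) ^ n - 1 := by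
    rw [X_dvd_iff, coeff_zero_eq_eval_zero]
    simp
  refine X_pow_dvd_sub_of_X_pow_dvd_pow_sub_pow hn ?_ ?_ ?_
  · simp [eval_comp, eval_zero_padeNum, add_comm l k,
      (Nat.choose_symm_add : (k + l).choose k = _)]
  · simp only [eval_comp, eval_sub, eval_pow, eval_add, eval_one, eval_X, add_zero, one_pow,
      sub_self, eval_zero_padeNum]
    exact_mod_cast (Nat.choose_pos (Nat.le_add_left l k)).ne'
  · obtain ⟨W, hW⟩ := X_pow_dvd_padeNum_pow_mul_sub hα k l
    have hcomp := congrArg (fun P ↦ P.comp ((1 + X) ^ n - 1)) hW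
    simp only [sub_comp, mul_comp, pow_comp, add_comp, one_comp, X_comp,
      add_sub_cancel] at hcomp
    rw [mul_pow, hcomp]
    exact (pow_dvd_pow_of_dvd hX _).mul_right _

end PadeApproximants

section IntegerPadeApproximants

open Polynomial

/-- The integer polynomial `n ^ (2 * (k + l)) * padeNum (a / n) k l`, the Padé numerator cleared of
denominators. -/
noncomputable def intPadeNum (n : ℕ) (a : ℤ) (k l : ℕ) : ℤ[X] :=
  ∑ j ∈ range (k + 1), monomial j
    (n ^ (2 * (k + l - j)) * (k + l - j).choose l * scaledChoose n (a + l * n) j)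

lemma natDegree_intPadeNum_le (n : ℕ) (a : ℤ) (k l : ℕ) : (intPadeNum n a k l).natDegree ≤ k :=
  natDegree_sum_le_of_forall_le _ _ fun _ hj ↦
    (natDegree_monomial_le _).trans (Nat.lt_succ_iff.1 (mem_range.1 hj))

lemma map_intPadeNum {K : Type*} [Field K] [CharZero K] [BinomialRing K] {n : ℕ} (hn : n ≠ 0)
    (a : ℤ) (k l : ℕ) :
    (intPadeNum n a k l).map (Int.castRingHom K) =
      C ((n : K) ^ (2 * (k + l))) * padeNum ((a : K) / n) k l := by
  have hn' : (n : K) ≠ 0 := by exact_mod_cast hn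
  rw [intPadeNum, padeNum, Polynomial.map_sum, mul_sum]
  refine sum_congr rfl fun j hj ↦ ?_
  rw [mem_range] at hj
  rw [map_monomial, C_mul_monomial, eq_intCast]
  push_cast
  rw [cast_scaledChoose hn, show 2 * (k + l) = 2 * (k + l - j) + 2 * j by omega, pow_add]
  push_cast
  rw [add_div, mul_div_cancel_right₀ _ hn']
  ring_nf

lemma aeval_intPadeNum {K : Type*} [Field K] [CharZero K] [BinomialRing K] {n : ℕ} (hn : n ≠ 0)
    (a : ℤ) (k l : ℕ) (t : K) :
    aeval t (intPadeNum n a k l) = n ^ (2 * (k + l)) * (padeNum ((a : K) / n) k l).eval t := by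
  rw [aeval_def, ← eval_map, algebraMap_int_eq, map_intPadeNum hn, eval_mul, eval_C]

lemma abs_coeff_intPadeNum_le {n : ℕ} (hn : n ≠ 0) {a : ℤ} (ha : |a| ≤ n) (k l j : ℕ) :
    |(intPadeNum n a k l).coeff j| ≤ (8 * n ^ 2) ^ (k + l) := by
  obtain hkj | hjk := lt_or_ge k j
  · rw [coeff_eq_zero_of_natDegree_lt ((natDegree_intPadeNum_le n a k l).trans_lt hkj), abs_zero]
    positivity
  have hα : |(a : ℚ) / n + l| ≤ l + 1 := by
    have : |(a : ℚ) / n| ≤ 1 := by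
      rw [abs_div, Nat.abs_cast]
      exact div_le_one_of_le₀ (by exact_mod_cast ha) (by positivity)
    linarith [abs_add_le ((a : ℚ) / n) l, Nat.abs_cast (R := ℚ) l]
  have hcoeff : ((intPadeNum n a k l).coeff j : ℚ) = (n : ℚ) ^ (2 * (k + l)) *
      ((k + l - j).choose l * Ring.choose ((a : ℚ) / n + l) j) := by
    rw [← coeff_padeNum _ (by omega), ← coeff_C_mul, ← map_intPadeNum hn, coeff_map, eq_intCast]
  have hchoose : ((k + l - j).choose l : ℚ) ≤ 2 ^ (k + l - j) := by
    exact_mod_cast Nat.choose_le_two_pow _ _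
  suffices |((intPadeNum n a k l).coeff j : ℚ)| ≤ (8 * n ^ 2 : ℚ) ^ (k + l) by exact_mod_cast this
  rw [hcoeff, abs_mul, abs_mul, Nat.abs_cast, abs_of_nonneg (by positivity)]
  calc (n : ℚ) ^ (2 * (k + l)) * ((k + l - j).choose l * |Ring.choose ((a : ℚ) / n + l) j|)
      ≤ n ^ (2 * (k + l)) * (2 ^ (k + l - j) * 2 ^ (l + j)) := by
        gcongr
        exact abs_choose_le_two_pow hα j
    _ ≤ n ^ (2 * (k + l)) * 2 ^ (3 * (k + l)) := by
        rw [← pow_add]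
        gcongr
        · norm_num
        · omega
    _ = (8 * n ^ 2) ^ (k + l) := by
        rw [mul_pow, pow_mul, pow_mul]
        norm_num
        ring

theorem X_pow_dvd_intPadeNum_comp_mul_sub {n : ℕ} (hn : n ≠ 0) (k l : ℕ) :
    X ^ (k + l + 1) ∣
      (intPadeNum n (-1) l k).comp ((1 + X) ^ n - 1) * (1 + X) -
        (intPadeNum n 1 k l).comp ((1 + X) ^ n - 1) := by
  have hα : (n : ℚ) * (1 / n) = 1 := mul_one_div_cancel (by exact_mod_cast hn)
  rw [← X_pow_dvd_map_iff (Int.castRingHom ℚ).injective_int]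
  simp only [Polynomial.map_sub, Polynomial.map_mul, map_comp, Polynomial.map_add,
    Polynomial.map_pow, Polynomial.map_one, map_X, map_intPadeNum hn, mul_comp, C_comp]
  push_cast
  rw [neg_div, add_comm l k, mul_assoc, ← mul_sub]
  exact (X_pow_dvd_padeNum_comp_mul_sub hα k l).mul_left _

variable {R : Type*} [CommRing R]

lemma eval_homogenize_eq_sum_range (P : R[X]) (l : ℕ) (x y : R) :
    MvPolynomial.eval ![x, y] (P.homogenize l) =
      ∑ j ∈ range (l + 1), P.coeff j * (x ^ j * y ^ (l - j)) := by
  rw [homogenize, map_sum, Nat.sum_antidiagonal_eq_sum_range_succ_mk]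
  refine sum_congr rfl fun j _ ↦ ?_
  simp [MvPolynomial.eval_monomial, Finsupp.prod_fintype, Fin.prod_univ_two]

lemma algebraMap_eval_homogenize {A : Type*} [CommRing A] [Algebra R A] {P : R[X]} {l : ℕ}
    (hP : P.natDegree ≤ l) {x y : R} {t : A} (hx : algebraMap R A x = algebraMap R A y * t) :
    algebraMap R A (MvPolynomial.eval ![x, y] (P.homogenize l)) =
      algebraMap R A y ^ l * aeval t P := by
  rw [eval_homogenize_eq_sum_range, aeval_eq_sum_range' (Nat.lt_succ_of_le hP), map_sum, mul_sum]
  refine sum_congr rfl fun j hj ↦ ?_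
  rw [mem_range, Nat.lt_succ_iff] at hj
  rw [map_mul, map_mul, map_pow, map_pow, hx, ← pow_mul_pow_sub (algebraMap R A y) hj,
    Algebra.smul_def]
  ring

lemma pow_sub_dvd_eval_homogenize {P : R[X]} {k : ℕ} (hP : P.natDegree ≤ k) (l : ℕ) (x y : R) :
    y ^ (l - k) ∣ MvPolynomial.eval ![x, y] (P.homogenize l) := by
  rw [eval_homogenize_eq_sum_range]
  refine dvd_sum fun j _ ↦ ?_
  obtain hjk | hkj := le_or_gt j k
  · exact ((pow_dvd_pow y (by omega)).mul_left _).mul_left _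
  · simp [coeff_eq_zero_of_natDegree_lt (hP.trans_lt hkj)]

lemma abs_eval_homogenize_le [LinearOrder R] [IsStrictOrderedRing R] {P : R[X]} {k l : ℕ}
    (hP : P.natDegree ≤ k) (hkl : k ≤ l) {x y B : R} (hB : ∀ j, |P.coeff j| ≤ B)
    (hyx : |y| ≤ |x|) :
    |MvPolynomial.eval ![x, y] (P.homogenize l)| ≤ (l + 1) * (B * (|x| ^ k * |y| ^ (l - k))) := by
  have hB0 : 0 ≤ B := (abs_nonneg _).trans (hB 0)
  have hterm : ∀ j ∈ range (l + 1),
      |P.coeff j * (x ^ j * y ^ (l - j))| ≤ B * (|x| ^ k * |y| ^ (l - k)) := by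
    intro j _
    obtain hjk | hkj := le_or_gt j k
    · rw [abs_mul, abs_mul, abs_pow, abs_pow]
      gcongr ?_ * ?_
      · exact hB j
      calc |x| ^ j * |y| ^ (l - j) = |x| ^ j * |y| ^ (k - j) * |y| ^ (l - k) := by
            rw [mul_assoc, ← pow_add]
            congr 2
            omega
        _ ≤ |x| ^ j * |x| ^ (k - j) * |y| ^ (l - k) := by gcongr
        _ = |x| ^ k * |y| ^ (l - k) := by rw [pow_mul_pow_sub _ hjk]
    · rw [coeff_eq_zero_of_natDegree_lt (hP.trans_lt hkj), zero_mul, abs_zero]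
      positivity
  rw [eval_homogenize_eq_sum_range]
  calc _ ≤ ∑ j ∈ range (l + 1), |P.coeff j * (x ^ j * y ^ (l - j))| := abs_sum_le_sum_abs _ _
    _ ≤ ∑ _j ∈ range (l + 1), B * (|x| ^ k * |y| ^ (l - k)) := sum_le_sum hterm
    _ = (l + 1) * (B * (|x| ^ k * |y| ^ (l - k))) := by simp

end IntegerPadeApproximants

section AuxiliaryInteger

open Polynomial

/-- The auxiliary integer of the Thue–Siegel method. The second evaluation divided by the first
approximates `(1 + x / y) ^ (1 / n)`, so `auxInt` measures how well `α / β` does. The factor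
`n ^ (k + l + 1)` compensates for primes dividing `n`. -/
noncomputable def auxInt (n k l : ℕ) (x y α β : ℤ) : ℤ :=
  n ^ (k + l + 1) *
    (MvPolynomial.eval ![x, y] ((intPadeNum n (-1) l k).homogenize l) * α -
      MvPolynomial.eval ![x, y] ((intPadeNum n 1 k l).homogenize l) * β)

lemma cast_auxInt {A : Type*} [CommRing A] (n : ℕ) {k l : ℕ} (hkl : k ≤ l) {x y : ℤ} {t : A}
    (hx : (x : A) = y * t) (α β : ℤ) :
    (auxInt n k l x y α β : A) = y ^ l * (n ^ (k + l + 1) *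
      (aeval t (intPadeNum n (-1) l k) * α - aeval t (intPadeNum n 1 k l) * β)) := by
  have hQ := algebraMap_eval_homogenize (natDegree_intPadeNum_le n (-1) l k) (A := A)
    (by simpa using hx)
  have hP := algebraMap_eval_homogenize ((natDegree_intPadeNum_le n 1 k l).trans hkl) (A := A)
    (by simpa using hx)
  simp only [algebraMap_int_eq, eq_intCast] at hQ hP
  rw [auxInt]
  push_cast
  rw [hQ, hP]
  ring

lemma dvd_auxInt (n k l : ℕ) {m x y α : ℤ} (hα : m ∣ α) (hy : m ∣ y ^ (l - k)) (β : ℤ) :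
    m ∣ auxInt n k l x y α β :=
  (dvd_sub (hα.mul_left _) ((hy.trans (pow_sub_dvd_eval_homogenize
    (natDegree_intPadeNum_le n 1 k l) l x y)).mul_right _)).mul_left _

lemma one_div_natCast_ne_intCast {n : ℕ} (hn : 2 ≤ n) (i : ℤ) : (1 / n : ℚ) ≠ i := by
  intro h
  rw [div_eq_iff (by positivity)] at h
  have hunit : i * n = 1 := by exact_mod_cast h.symm
  have := Int.eq_one_or_neg_one_of_mul_eq_one' hunit
  omega

lemma choose_mul_choose_one_div_ne_zero {n : ℕ} (hn : 2 ≤ n) (k l : ℕ) :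
    Ring.choose (1 / n + l : ℚ) k * Ring.choose (-(1 / n) + k : ℚ) (l + 1) ≠ 0 := by
  refine mul_ne_zero (choose_ne_zero_of_forall_ne_natCast (fun i hi ↦ ?_) _)
    (choose_ne_zero_of_forall_ne_natCast (fun i hi ↦ ?_) _)
  · refine one_div_natCast_ne_intCast hn (i - l) ?_
    push_cast
    linear_combination hi
  · refine one_div_natCast_ne_intCast hn (k - i) ?_
    push_cast
    linear_combination -hi

theorem auxInt_ne_zero_or_auxInt_succ_ne_zero {n k l : ℕ} (hn : 2 ≤ n) (hkl : k ≤ l) {x y : ℤ}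
    (hx : x ≠ 0) (hy : y ≠ 0) (α : ℤ) {β : ℤ} (hβ : β ≠ 0) :
    auxInt n k l x y α β ≠ 0 ∨ auxInt n k (l + 1) x y α β ≠ 0 := by
  by_contra! hzero
  have hx' : (x : ℚ) ≠ 0 := by exact_mod_cast hx
  have hy' : (y : ℚ) ≠ 0 := by exact_mod_cast hy
  have hβ' : (β : ℚ) ≠ 0 := by exact_mod_cast hβ
  set t : ℚ := x / y
  have hproportional {m : ℕ} (hkm : k ≤ m) (hm : auxInt n k m x y α β = 0) :
      (padeNum (-(1 / n) : ℚ) m k).eval t * α = (padeNum (1 / n : ℚ) k m).eval t * β := by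
    have hcast := cast_auxInt n hkm (mul_div_cancel₀ (x : ℚ) hy').symm α β
    rw [hm, Int.cast_zero, aeval_intPadeNum (by omega), aeval_intPadeNum (by omega),
      Int.cast_neg, Int.cast_one, neg_div, add_comm m k] at hcast
    have hfactor : (y : ℚ) ^ m * (n ^ (k + m + 1) * n ^ (2 * (k + m))) ≠ 0 := by positivity
    rw [← sub_eq_zero]
    refine (mul_eq_zero.1 ?_).resolve_left hfactor
    linear_combination -hcast
  have hdet := congrArg (eval t) (padeNum_mul_padeNum_sub_eq_C_mul_X_pow (1 / n : ℚ) k l)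
  simp only [eval_sub, eval_mul, eval_C, eval_pow, eval_X] at hdet
  refine mul_ne_zero (mul_ne_zero (choose_mul_choose_one_div_ne_zero hn k l)
    (pow_ne_zero (k + l + 1) (div_ne_zero hx' hy'))) hβ' ?_
  rw [← hdet]
  linear_combination (padeNum (-(1 / n) : ℚ) l k).eval t * hproportional (by omega) hzero.2 -
    (padeNum (-(1 / n) : ℚ) (l + 1) k).eval t * hproportional hkl hzero.1

lemma two_mul_succ_mul_pow_le {n : ℕ} (hn : n ≠ 0) (k l : ℕ) :
    2 * (n ^ (k + l + 1) * ((l + 1) * (8 * n ^ 2) ^ (k + l))) ≤ (16 * n ^ 3) ^ (k + l + 1) := by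
  have hl : 2 * (l + 1) ≤ 2 ^ (k + l + 1) := by
    have hlt := Nat.lt_two_pow_self (n := l)
    have hle := Nat.pow_le_pow_right two_pos (Nat.le_add_left l k)
    rw [pow_succ]
    omega
  calc 2 * (n ^ (k + l + 1) * ((l + 1) * (8 * n ^ 2) ^ (k + l)))
      = 2 * (l + 1) * (n ^ (k + l + 1) * (8 * n ^ 2) ^ (k + l)) := by ring
    _ ≤ 2 ^ (k + l + 1) * (n ^ (k + l + 1) * (8 * n ^ 2) ^ (k + l + 1)) := by
        gcongr ?_ * (_ * ?_)
        exact Nat.pow_le_pow_right (by positivity) (Nat.le_succ _)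
    _ = (16 * n ^ 3) ^ (k + l + 1) := by
        rw [← mul_pow, ← mul_pow]
        ring

lemma abs_auxInt_le {n k l : ℕ} (hn : n ≠ 0) (hkl : k ≤ l) {x y : ℤ} (hyx : |y| ≤ |x|) (α β : ℤ) :
    |auxInt n k l x y α β| ≤ (16 * n ^ 3) ^ (k + l + 1) *
      max (|x| ^ l * |α|) (|x| ^ k * |y| ^ (l - k) * |β|) := by
  set M := max (|x| ^ l * |α|) (|x| ^ k * |y| ^ (l - k) * |β|)
  set B : ℤ := (8 * n ^ 2) ^ (k + l)
  have hone : |(1 : ℤ)| ≤ n := by rw [abs_one]; exact_mod_cast Nat.one_le_iff_ne_zero.2 hn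
  have hQ := abs_eval_homogenize_le (natDegree_intPadeNum_le n (-1) l k) le_rfl
    (abs_coeff_intPadeNum_le hn (by rwa [abs_neg]) l k) hyx
  have hP := abs_eval_homogenize_le (natDegree_intPadeNum_le n 1 k l) hkl
    (abs_coeff_intPadeNum_le hn hone k l) hyx
  rw [Nat.sub_self, pow_zero, mul_one, add_comm l k] at hQ
  rw [auxInt, abs_mul, abs_of_nonneg (by positivity)]
  calc _ ≤ n ^ (k + l + 1) * (((l : ℤ) + 1) * (B * |x| ^ l) * |α| +
          (l + 1) * (B * (|x| ^ k * |y| ^ (l - k))) * |β|) := by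
        gcongr
        refine (abs_sub _ _).trans ?_
        rw [abs_mul, abs_mul]
        gcongr
    _ = n ^ (k + l + 1) * ((l + 1) * B) *
          (|x| ^ l * |α| + |x| ^ k * |y| ^ (l - k) * |β|) := by ring
    _ ≤ n ^ (k + l + 1) * ((l + 1) * B) * (M + M) := by
        gcongr
        · exact le_max_left _ _
        · exact le_max_right _ _
    _ = 2 * (n ^ (k + l + 1) * ((l + 1) * B)) * M := by ring
    _ ≤ (16 * n ^ 3) ^ (k + l + 1) * M := by
        gcongr
        simp only [B]
        exact_mod_cast two_mul_succ_mul_pow_le hn k l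

lemma log_auxInt_le {n k l : ℕ} (hn : n ≠ 0) (hkl : k ≤ l) {x y α β : ℤ} (hyx : |y| ≤ |x|)
    (hx : x ≠ 0) (hy : y ≠ 0) (hα : α ≠ 0) (hβ : β ≠ 0) (hE : auxInt n k l x y α β ≠ 0) {B : ℝ}
    (hxα : l * Real.log x + Real.log α ≤ B)
    (hxβ : k * Real.log x + (l - k) * Real.log y + Real.log β ≤ B) :
    Real.log (auxInt n k l x y α β) ≤ (k + l + 1) * Real.log (16 * n ^ 3) + B := by
  set E := auxInt n k l x y α β
  have hE' : (0 : ℝ) < |(E : ℝ)| := by simpa using hE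
  have hx' : (x : ℝ) ≠ 0 := by exact_mod_cast hx
  have hy' : (y : ℝ) ≠ 0 := by exact_mod_cast hy
  have hα' : (α : ℝ) ≠ 0 := by exact_mod_cast hα
  have hβ' : (β : ℝ) ≠ 0 := by exact_mod_cast hβ
  have hmax : max (|(x : ℝ)| ^ l * |(α : ℝ)|) (|(x : ℝ)| ^ k * |(y : ℝ)| ^ (l - k) * |(β : ℝ)|) ≤
      Real.exp B := by
    refine max_le ?_ ?_ <;> rw [← Real.log_le_iff_le_exp (by positivity)]
    · simpa [Real.log_mul, hx', hα'] using hxα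
    · simpa [Real.log_mul, hx', hy', hβ', Nat.cast_sub hkl] using hxβ
  have habs : |(E : ℝ)| ≤ (16 * n ^ 3) ^ (k + l + 1) * Real.exp B := by
    refine le_trans ?_ (mul_le_mul_of_nonneg_left hmax (by positivity))
    exact_mod_cast abs_auxInt_le hn hkl hyx α β
  have hn' : (16 * n ^ 3 : ℝ) ≠ 0 := by positivity
  have hlog := Real.log_le_log hE' habs
  rw [Real.log_abs, Real.log_mul (pow_ne_zero _ hn') (Real.exp_ne_zero B), Real.log_pow,
    Real.log_exp] at hlog
  exact_mod_cast hlog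

end AuxiliaryInteger

section LocalRing

open Polynomial

variable {R : Type*} [CommRing R] [IsLocalRing R]

lemma associated_one_add_pow_sub_one {n : ℕ} {s ϖ : R} (hϖ : ϖ ∈ nonunits R) (hs : n * ϖ ∣ s) :
    Associated ((1 + s) ^ n - 1) (n * s) := by
  have hgeom : s ∣ ∑ i ∈ range n, (1 + s) ^ i - n := by
    have hsum : ∑ i ∈ range n, (1 + s) ^ i - n = ∑ i ∈ range n, ((1 + s) ^ i - 1) := by simp
    rw [hsum]
    refine dvd_sum fun i _ ↦ ?_
    simpa using sub_dvd_pow_sub_pow (1 + s) 1 i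
  obtain ⟨r, hr⟩ := hs.trans hgeom
  have hunit : IsUnit (1 + ϖ * r) := by
    have : -(ϖ * r) ∈ nonunits R := by
      rw [mem_nonunits_iff, IsUnit.neg_iff]
      exact fun h ↦ hϖ (isUnit_of_mul_isUnit_left h)
    simpa using IsLocalRing.isUnit_one_sub_self_of_mem_nonunits _ this
  refine Associated.symm ⟨hunit.unit, ?_⟩
  rw [IsUnit.unit_spec]
  have := mul_geom_sum (1 + s) n
  linear_combination this - s * hr

lemma dvd_pow_mul_aeval_intPadeNum_sub {n k l : ℕ} (hn : n ≠ 0) {s t₁ t₂ ϖ d m : R}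
    (hϖ : ϖ ∈ nonunits R) (hs : n * ϖ ∣ s) (h : (1 + s) ^ n * (1 + t₂) = 1 + t₁)
    (hdt₁ : d ∣ t₁) (hdt₂ : d ∣ t₂) (hmt₂ : m ∣ t₂) (hmd : m ∣ d ^ (k + l + 1)) :
    m ∣ n ^ (k + l + 1) *
      (aeval t₁ (intPadeNum n (-1) l k) * (1 + s) - aeval t₁ (intPadeNum n 1 k l)) := by
  set Q := intPadeNum n (-1) l k
  set P := intPadeNum n 1 k l
  set τ := (1 + s) ^ n - 1
  have hsub : t₁ - τ = (1 + s) ^ n * t₂ := by linear_combination -h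
  have hdτ : d ∣ τ := (dvd_sub_right hdt₁).1 (hsub ▸ hdt₂.mul_left _)
  have hds : d ∣ n * s := (associated_one_add_pow_sub_one hϖ hs).dvd_iff_dvd_right.1 hdτ
  have hmτ : m ∣ n ^ (k + l + 1) * (aeval τ Q * (1 + s) - aeval τ P) := by
    obtain ⟨W, hW⟩ := X_pow_dvd_intPadeNum_comp_mul_sub hn k l
    have heval := congrArg (aeval s) hW
    simp only [map_sub, map_mul, aeval_comp, map_add, map_pow, map_one, aeval_X] at heval
    rw [heval, ← mul_assoc, ← mul_pow]
    exact (hmd.trans (pow_dvd_pow_of_dvd hds _)).mul_right _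
  have hmsub (F : ℤ[X]) : m ∣ aeval t₁ F - aeval τ F := by
    rw [aeval_def, aeval_def, ← eval_map, ← eval_map]
    exact (hsub ▸ hmt₂.mul_left _).trans (sub_dvd_eval_sub _ _ _)
  have hsplit : n ^ (k + l + 1) * (aeval t₁ Q * (1 + s) - aeval t₁ P) =
      n ^ (k + l + 1) * (aeval τ Q * (1 + s) - aeval τ P) +
        n ^ (k + l + 1) * ((aeval t₁ Q - aeval τ Q) * (1 + s) - (aeval t₁ P - aeval τ P)) := by
    ring
  rw [hsplit]
  exact dvd_add hmτ ((dvd_sub ((hmsub Q).mul_right _) (hmsub P)).mul_left _)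

end LocalRing

section LogarithmicValuation

/-- The contribution of the prime `p` to `log |x|`, that is, `-log |x|_p` for the `p`-adic absolute
value. -/
noncomputable def logVal (p : ℕ) (x : ℤ) : ℝ :=
  x.natAbs.factorization p * Real.log p

lemma logVal_nonneg (p : ℕ) (x : ℤ) : 0 ≤ logVal p x :=
  mul_nonneg (Nat.cast_nonneg _) (Real.log_natCast_nonneg p)

lemma logVal_mul (p : ℕ) {x y : ℤ} (hx : x ≠ 0) (hy : y ≠ 0) :
    logVal p (x * y) = logVal p x + logVal p y := by
  rw [logVal, Int.natAbs_mul, Nat.factorization_mul (by simpa) (by simpa), Finsupp.add_apply]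
  push_cast
  exact add_mul _ _ _

lemma logVal_pow (p : ℕ) (x : ℤ) (m : ℕ) : logVal p (x ^ m) = m * logVal p x := by
  simp [logVal, Int.natAbs_pow, mul_assoc]

lemma logVal_eq_zero_of_not_dvd {p : ℕ} {x : ℤ} (h : ¬ (p : ℤ) ∣ x) : logVal p x = 0 := by
  rw [logVal, Nat.factorization_eq_zero_of_not_dvd (by rwa [← Int.natCast_dvd]), Nat.cast_zero,
    zero_mul]

lemma pow_dvd_iff_le_natAbs_factorization {p e : ℕ} (hp : p.Prime) {x : ℤ} (hx : x ≠ 0) :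
    (p : ℤ) ^ e ∣ x ↔ e ≤ x.natAbs.factorization p := by
  rw [← hp.pow_dvd_iff_le_factorization (Int.natAbs_ne_zero.2 hx), ← Int.natCast_dvd,
    Nat.cast_pow]

lemma mul_log_le_logVal {p e : ℕ} (hp : p.Prime) {x : ℤ} (hx : x ≠ 0) (h : (p : ℤ) ^ e ∣ x) :
    e * Real.log p ≤ logVal p x := by
  have he := (pow_dvd_iff_le_natAbs_factorization hp hx).1 h
  exact mul_le_mul_of_nonneg_right (by exact_mod_cast he) (Real.log_natCast_nonneg p)

lemma logVal_le_mul_log {p e : ℕ} (hp : p.Prime) {x : ℤ} (hx : x ≠ 0) (h : ¬ (p : ℤ) ^ e ∣ x) :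
    logVal p x ≤ e * Real.log p := by
  rw [pow_dvd_iff_le_natAbs_factorization hp hx, not_le] at h
  exact mul_le_mul_of_nonneg_right (by exact_mod_cast h.le) (Real.log_natCast_nonneg p)

lemma IsSUnit.primeFactors_subset {S : Finset ℕ} {x : ℤ} (hx : IsSUnit S x) :
    x.natAbs.primeFactors ⊆ S := fun p hp ↦
  hx.2 p (Nat.prime_of_mem_primeFactors hp) (Int.natCast_dvd.2 (Nat.dvd_of_mem_primeFactors hp))

lemma IsSUnit.sum_logVal {S : Finset ℕ} {x : ℤ} (hx : IsSUnit S x) :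
    ∑ p ∈ S, logVal p x = Real.log x := by
  rw [← Real.log_abs, ← Int.cast_abs, Int.abs_eq_natAbs, Int.cast_natCast,
    Real.log_nat_eq_sum_factorization,
    Finsupp.sum_of_support_subset _ hx.primeFactors_subset _ (by simp)]
  rfl

lemma sum_logVal_le_log (S : Finset ℕ) {x : ℤ} (hx : x ≠ 0) :
    ∑ p ∈ S, logVal p x ≤ Real.log x := by
  have hunit : IsSUnit (S ∪ x.natAbs.primeFactors) x :=
    ⟨hx, fun p hp hpx ↦ mem_union_right _ (by simpa [hp, hx] using Int.natCast_dvd.1 hpx)⟩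
  rw [← hunit.sum_logVal]
  exact sum_le_sum_of_subset_of_nonneg subset_union_left fun p _ _ ↦ logVal_nonneg p x

lemma min_logVal_le {p : ℕ} (hp : p.Prime) {a b c : ℤ} (ha : a ≠ 0) (hb : b ≠ 0) (hc : c ≠ 0)
    (h : ∀ e : ℕ, (p : ℤ) ^ e ∣ a → (p : ℤ) ^ e ∣ b → (p : ℤ) ^ e ∣ c) :
    min (logVal p a) (logVal p b) ≤ logVal p c := by
  rw [logVal, logVal, ← min_mul_of_nonneg _ _ (Real.log_natCast_nonneg p), ← Nat.cast_min]
  refine mul_log_le_logVal hp hc (h _ ?_ ?_)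
  · exact (pow_dvd_iff_le_natAbs_factorization hp ha).2 (min_le_left _ _)
  · exact (pow_dvd_iff_le_natAbs_factorization hp hb).2 (min_le_right _ _)

end LogarithmicValuation

section PowerFreePart

lemma NthPowerFree.natAbs_le {S : Finset ℕ} {n : ℕ} {b : ℤ} (hS : ∀ p ∈ S, p.Prime)
    (hb : IsSUnit S b) (hfree : NthPowerFree n b.natAbs) :
    b.natAbs ≤ ∏ p ∈ S, p ^ n := by
  rw [← Nat.prod_factorization_pow_eq_self (Int.natAbs_ne_zero.2 hb.1),
    Finsupp.prod_of_support_subset _ hb.primeFactors_subset _ (by simp)]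
  refine prod_le_prod' fun p hp ↦ Nat.pow_le_pow_right (hS p hp).pos ?_
  exact le_of_not_ge fun h ↦ hfree p (hS p hp)
    (((hS p hp).pow_dvd_iff_le_factorization (Int.natAbs_ne_zero.2 hb.1)).2 h)

lemma IsSUnit.of_dvd {S : Finset ℕ} {x y : ℤ} (hy : IsSUnit S y) (hxy : x ∣ y) : IsSUnit S x :=
  ⟨ne_zero_of_dvd_ne_zero hy.1 hxy, fun p hp hpx ↦ hy.2 p hp (hpx.trans hxy)⟩

lemma exists_eq_mul_pow_nthPowerFree {n : ℕ} (hn : n ≠ 0) {y : ℤ} (hy : y ≠ 0) :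
    ∃ b v : ℤ, y = b * v ^ n ∧ NthPowerFree n b.natAbs := by
  induction h : y.natAbs using Nat.strong_induction_on generalizing y with
  | _ N ih =>
  subst h
  by_cases hfree : NthPowerFree n y.natAbs
  · exact ⟨y, 1, by simp, hfree⟩
  · simp only [NthPowerFree, not_forall, not_not] at hfree
    obtain ⟨p, hp, hdvd⟩ := hfree
    obtain ⟨w, rfl⟩ : (p : ℤ) ^ n ∣ y := by
      rwa [← Nat.cast_pow, Int.natCast_dvd]
    have hw := right_ne_zero_of_mul hy
    have hlt : w.natAbs < ((p : ℤ) ^ n * w).natAbs := by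
      rw [Int.natAbs_mul, Int.natAbs_pow, Int.natAbs_natCast]
      exact lt_mul_of_one_lt_left (Int.natAbs_pos.2 hw) (Nat.one_lt_pow hn hp.one_lt)
    obtain ⟨b, v, hbv, hb⟩ := ih _ hlt hw rfl
    exact ⟨b, p * v, by rw [mul_pow, mul_left_comm, ← hbv], hb⟩

end PowerFreePart

lemma mul_sub_mul_le_of_abs_div_sub_div_le {a₁ a₂ X₁ X₂ δ r : ℝ} (ha₂ : 0 ≤ a₂) (hX₁ : 0 < X₁)
    (hX₂ : 0 < X₂) (hr : 0 ≤ r) (hrX : r * X₁ ≤ X₂) (h : |a₁ / X₁ - a₂ / X₂| ≤ δ) :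
    r * (a₁ - δ * X₁) ≤ a₂ := by
  have hdiv : a₁ / X₁ - δ ≤ a₂ / X₂ := by linarith [(abs_le.1 h).2]
  calc r * (a₁ - δ * X₁) = r * X₁ * (a₁ / X₁ - δ) := by field_simp
    _ ≤ r * X₁ * (a₂ / X₂) := by gcongr
    _ ≤ X₂ * (a₂ / X₂) := by gcongr
    _ = a₂ := mul_div_cancel₀ a₂ hX₂.ne'

lemma le_mul_add_mul_of_abs_div_sub_div_le {a₁ a₂ X₁ X₂ δ r : ℝ} (ha₁ : 0 ≤ a₁) (hX₁ : 0 < X₁)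
    (hX₂ : 0 < X₂) (hXr : X₂ ≤ r * X₁) (h : |a₁ / X₁ - a₂ / X₂| ≤ δ) :
    a₂ ≤ r * (a₁ + δ * X₁) := by
  have hδ : 0 ≤ δ := (abs_nonneg _).trans h
  have hdiv : a₂ / X₂ ≤ a₁ / X₁ + δ := by linarith [(abs_le.1 h).1]
  calc a₂ = X₂ * (a₂ / X₂) := (mul_div_cancel₀ a₂ hX₂.ne').symm
    _ ≤ X₂ * (a₁ / X₁ + δ) := by gcongr
    _ ≤ r * X₁ * (a₁ / X₁ + δ) := by gcongr
    _ = r * (a₁ + δ * X₁) := by field_simp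

lemma exists_nat_ge_mul_le_and_le_mul {N : ℕ} {a b : ℝ} (ha : 0 < a) (hN : N * a ≤ b) :
    ∃ s : ℕ, N ≤ s ∧ s * a ≤ b ∧ b ≤ (s + 1) * a := by
  have hb : 0 ≤ b / a := div_nonneg ((by positivity : 0 ≤ N * a).trans hN) ha.le
  refine ⟨⌊b / a⌋₊, Nat.le_floor ((le_div_iff₀ ha).2 hN), ?_, ?_⟩
  · exact (le_div_iff₀ ha).1 (Nat.floor_le hb)
  · exact (div_le_iff₀ ha).1 (Nat.lt_floor_add_one _).le

lemma exists_infinite_subset_forall_dist_le {α E : Type*} [PseudoMetricSpace E] {A : Set α}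
    (hA : A.Infinite) {f : α → E} {K : Set E} (hK : TotallyBounded K) (hf : ∀ a, f a ∈ K) {δ : ℝ}
    (hδ : 0 < δ) :
    ∃ B ⊆ A, B.Infinite ∧ ∀ a ∈ B, ∀ b ∈ B, dist (f a) (f b) ≤ δ := by
  obtain ⟨C, hC, hcover⟩ := Metric.totallyBounded_iff.1 hK (δ / 2) (half_pos hδ)
  obtain ⟨c, -, hc⟩ : ∃ c ∈ C, (A ∩ f ⁻¹' Metric.ball c (δ / 2)).Infinite := by
    by_contra! hfin
    refine hA ((hC.biUnion hfin).subset fun a ha ↦ ?_)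
    simpa [ha] using hcover (hf a)
  refine ⟨_, Set.inter_subset_left, hc, fun a ha b hb ↦ ?_⟩
  linarith [dist_triangle_right (f a) (f b) c, Metric.mem_ball.1 ha.2, Metric.mem_ball.1 hb.2]

/-- A solution of `x + y = z ^ n` in `S`-units `x` and `y` whose gcd is `n`th-power free, with the
smaller of the two units called `y` and written as `b * v ^ n` with `b` free of `n`th powers. -/
@[ext] structure NormalizedSolution (S : Finset ℕ) (n : ℕ) where
  (x y z b v : ℤ)
  isSUnit_x : IsSUnit S x
  isSUnit_y : IsSUnit S y
  z_ne_zero : z ≠ 0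
  nthPowerFree_gcd : NthPowerFree n (Int.gcd x y)
  add_eq_pow : x + y = z ^ n
  abs_y_le_abs_x : |y| ≤ |x|
  y_eq_mul_pow : y = b * v ^ n
  nthPowerFree_b : NthPowerFree n b.natAbs

namespace NormalizedSolution

variable {S : Finset ℕ} {n k l p : ℕ}

section Divisibility

open Polynomial

variable (t u : NormalizedSolution S n)

lemma v_ne_zero (hn : n ≠ 0) : t.v ≠ 0 := by
  intro hv
  exact t.isSUnit_y.1 (by rw [t.y_eq_mul_pow, hv, zero_pow hn, mul_zero])

lemma not_dvd_y_of_pow_dvd_x (hp : p.Prime) (hn : n ≠ 0) (hx : (p : ℤ) ^ n ∣ t.x) :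
    ¬ (p : ℤ) ∣ t.y := by
  intro hy
  have hz : (p : ℤ) ∣ t.z := (Nat.prime_iff_prime_int.1 hp).dvd_of_dvd_pow
    (t.add_eq_pow ▸ dvd_add ((dvd_pow_self _ hn).trans hx) hy)
  have hyn : (p : ℤ) ^ n ∣ t.y :=
    (dvd_add_right hx).1 (t.add_eq_pow ▸ pow_dvd_pow_of_dvd hz n)
  exact t.nthPowerFree_gcd p hp (by exact_mod_cast Int.dvd_coe_gcd hx hyn)

variable {t u}

lemma dvd_cast_auxInt {R : Type*} [CommRing R] [IsLocalRing R] (hn : n ≠ 0) (hkl : k ≤ l)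
    (hb : t.b = u.b) {ϖ d m : R} (hϖ : ϖ ∈ nonunits R)
    (hy₁ : IsUnit (t.y : R)) (hy₂ : IsUnit (u.y : R)) (hz₂ : IsUnit (u.z : R))
    (hs : n * ϖ ∣ (t.z * u.v - t.v * u.z : R)) (hdx₁ : d ∣ (t.x : R)) (hdx₂ : d ∣ (u.x : R))
    (hmx₂ : m ∣ (u.x : R)) (hmd : m ∣ d ^ (k + l + 1)) :
    m ∣ (auxInt n k l t.x t.y (t.z * u.v) (t.v * u.z) : R) := by
  have hy (w : NormalizedSolution S n) : (w.y : R) = w.b * w.v ^ n := by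
    exact_mod_cast congrArg (Int.cast (R := R)) w.y_eq_mul_pow
  have hxy (w : NormalizedSolution S n) : (w.x + w.y : R) = w.z ^ n := by
    exact_mod_cast congrArg (Int.cast (R := R)) w.add_eq_pow
  have hv₁ : IsUnit (t.v : R) := by
    rw [hy] at hy₁
    exact (isUnit_pow_iff hn).1 (isUnit_of_mul_isUnit_right hy₁)
  have hβ := hv₁.mul hz₂
  obtain ⟨τ₁, hτ₁⟩ : (t.y : R) ∣ t.x := hy₁.dvd
  obtain ⟨τ₂, hτ₂⟩ : (u.y : R) ∣ u.x := hy₂.dvd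
  obtain ⟨s, hs'⟩ : (t.v * u.z : R) ∣ t.z * u.v - t.v * u.z := hβ.dvd
  have hroot : (1 + s) ^ n * (1 + τ₂) = 1 + τ₁ := by
    have hα : (t.v * u.z : R) ^ n * (1 + s) ^ n = t.z ^ n * u.v ^ n := by
      rw [← mul_pow, ← mul_pow]
      congr 1
      linear_combination -hs'
    rw [mul_pow, ← hxy, ← hxy] at hα
    refine (hy₁.mul hy₂).mul_left_cancel ?_
    have hb' : (t.b : R) = u.b := by rw [hb]
    linear_combination -(t.y * (1 + s) ^ n * hτ₂) + (u.x + u.y) * (1 + s) ^ n * hy t +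
      t.b * hα + (t.x + t.y) * u.v ^ n * hb' - (t.x + t.y) * hy u + u.y * hτ₁
  rw [hτ₁, hy₁.dvd_mul_left] at hdx₁
  rw [hτ₂, hy₂.dvd_mul_left] at hdx₂ hmx₂
  rw [hs', hβ.dvd_mul_left] at hs
  have hdvd := dvd_pow_mul_aeval_intPadeNum_sub hn hϖ hs hroot hdx₁ hdx₂ hmx₂ hmd
  have hcast : (auxInt n k l t.x t.y (t.z * u.v) (t.v * u.z) : R) =
      t.y ^ l * (t.v * u.z) * (n ^ (k + l + 1) *
        (aeval τ₁ (intPadeNum n (-1) l k) * (1 + s) - aeval τ₁ (intPadeNum n 1 k l))) := by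
    rw [cast_auxInt n hkl hτ₁]
    push_cast
    linear_combination t.y ^ l * n ^ (k + l + 1) * aeval τ₁ (intPadeNum n (-1) l k) * hs'
  rw [hcast]
  exact hdvd.mul_left _

lemma pow_dvd_auxInt {e : ℕ} [Fact p.Prime] (hn : n ≠ 0) (hkl : k ≤ l) (hb : t.b = u.b)
    (hy₁ : ¬ (p : ℤ) ∣ t.y) (hy₂ : ¬ (p : ℤ) ∣ u.y) (hx₂ : (p : ℤ) ∣ u.x)
    (hs : (n * p : ℤ) ∣ t.z * u.v - t.v * u.z) (hex₁ : (p : ℤ) ^ e ∣ t.x ^ (k + l + 1))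
    (hex₂ : (p : ℤ) ^ e ∣ u.x) :
    (p : ℤ) ^ e ∣ auxInt n k l t.x t.y (t.z * u.v) (t.v * u.z) := by
  have hcast {a b : ℤ} (h : a ∣ b) : (a : ℤ_[p]) ∣ b := map_dvd (Int.castRingHom ℤ_[p]) h
  have hunit {a : ℤ} (ha : ¬ (p : ℤ) ∣ a) : IsUnit (a : ℤ_[p]) := by
    rw [PadicInt.isUnit_iff]
    exact le_antisymm (PadicInt.norm_le_one _)
      (not_lt.1 fun h ↦ ha ((PadicInt.norm_int_lt_one_iff_dvd a).1 h))
  have hz₂ : ¬ (p : ℤ) ∣ u.z := fun h ↦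
    hy₂ ((dvd_add_right hx₂).1 (u.add_eq_pow ▸ dvd_pow h hn))
  have hgcd : (p : ℤ) ^ e ∣ gcd u.x t.x ^ (k + l + 1) :=
    (dvd_gcd hex₂ hex₁).trans gcd_pow_right_dvd_pow_gcd
  rw [← PadicInt.pow_p_dvd_int_iff]
  refine dvd_cast_auxInt hn hkl hb (ϖ := (p : ℤ_[p])) (d := (gcd u.x t.x : ℤ)) PadicInt.p_nonunit
    (hunit hy₁) (hunit hy₂) (hunit hz₂) ?_ (hcast (gcd_dvd_right _ _))
    (hcast (gcd_dvd_left _ _)) ?_ ?_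
  · simpa using hcast hs
  · simpa using hcast hex₂
  · simpa using hcast hgcd

end Divisibility

section Height

variable (t : NormalizedSolution S n)

lemma isSUnit_b : IsSUnit S t.b :=
  t.isSUnit_y.of_dvd ⟨_, t.y_eq_mul_pow⟩

/-- The logarithmic height `log |x|` of a solution (recall that `Real.log` ignores signs). -/
noncomputable def height : ℝ :=
  Real.log t.x

lemma log_y_le_height : Real.log t.y ≤ t.height := by
  rw [height, ← Real.log_abs, ← Real.log_abs (t.x : ℝ)]
  have hy : (t.y : ℝ) ≠ 0 := by exact_mod_cast t.isSUnit_y.1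
  exact Real.log_le_log (by positivity) (by exact_mod_cast t.abs_y_le_abs_x)

lemma abs_z_pow_le : |t.z| ^ n ≤ 2 * |t.x| := by
  rw [← abs_pow, ← t.add_eq_pow]
  linarith [abs_add_le t.x t.y, t.abs_y_le_abs_x]

lemma mul_log_z_le : n * Real.log t.z ≤ t.height + 1 := by
  have hx : (t.x : ℝ) ≠ 0 := by exact_mod_cast t.isSUnit_x.1
  have hz : (t.z : ℝ) ≠ 0 := by exact_mod_cast t.z_ne_zero
  have hlog : Real.log (|(t.z : ℝ)| ^ n) ≤ Real.log (2 * |(t.x : ℝ)|) :=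
    Real.log_le_log (by positivity) (by exact_mod_cast t.abs_z_pow_le)
  rw [Real.log_pow, Real.log_mul two_ne_zero (abs_ne_zero.2 hx), Real.log_abs, Real.log_abs] at hlog
  linarith [Real.log_two_lt_d9, show t.height = Real.log t.x from rfl]

lemma mul_log_v_le (hn : n ≠ 0) : n * Real.log t.v ≤ Real.log t.y := by
  have hb : (t.b : ℝ) ≠ 0 := by exact_mod_cast t.isSUnit_b.1
  have hv : (t.v : ℝ) ≠ 0 := by exact_mod_cast t.v_ne_zero hn
  have hy : (t.y : ℝ) = t.b * t.v ^ n := by exact_mod_cast t.y_eq_mul_pow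
  rw [hy, Real.log_mul hb (pow_ne_zero _ hv), Real.log_pow]
  linarith [Real.log_intCast_nonneg t.b]

lemma logVal_y_le (hp : p.Prime) (hn : n ≠ 0) :
    logVal p t.y ≤ n * (logVal p t.v + Real.log p) := by
  have hb := logVal_le_mul_log hp t.isSUnit_b.1 (e := n) (by
    rw [← Nat.cast_pow, Int.natCast_dvd]
    exact t.nthPowerFree_b p hp)
  rw [t.y_eq_mul_pow, logVal_mul p t.isSUnit_b.1 (pow_ne_zero _ (t.v_ne_zero hn)), logVal_pow]
  linarith

/-- The shares of the primes of `S` in `log |x|` and in `log |y|`, both relative to the height. They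
form a point of a compact cube, by which solutions of very different heights can be compared. -/
noncomputable def profile : S → ℝ × ℝ := fun p ↦
  (logVal p t.x / t.height, logVal p t.y / t.height)

lemma profile_mem_Icc : t.profile ∈ Set.Icc (0 : S → ℝ × ℝ) 1 := by
  have hheight : 0 ≤ t.height := Real.log_intCast_nonneg _
  have hshare {w : ℤ} (hw : w ≠ 0) (hle : Real.log w ≤ t.height) (p : S) :
      logVal p w / t.height ∈ Set.Icc (0 : ℝ) 1 :=
    ⟨div_nonneg (logVal_nonneg _ _) hheight, div_le_one_of_le₀
      ((single_le_sum (fun q _ ↦ logVal_nonneg q w) p.2).trans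
        ((sum_logVal_le_log S hw).trans hle)) hheight⟩
  have hx := hshare t.isSUnit_x.1 le_rfl
  have hy := hshare t.isSUnit_y.1 t.log_y_le_height
  exact ⟨fun p ↦ ⟨(hx p).1, (hy p).1⟩, fun p ↦ ⟨(hx p).2, (hy p).2⟩⟩

end Height

lemma min_logVal_v_le (t u : NormalizedSolution S n) (hn : n ≠ 0) (hsl : s ≤ l) (hp : p.Prime)
    (hE : auxInt n s l t.x t.y (t.z * u.v) (t.v * u.z) ≠ 0) :
    min (logVal p u.v) ((l - s) * logVal p t.y) ≤
      logVal p (auxInt n s l t.x t.y (t.z * u.v) (t.v * u.z)) := by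
  have hmin := min_logVal_le hp (u.v_ne_zero hn) (pow_ne_zero (l - s) t.isSUnit_y.1) hE
    fun e hv hy ↦ dvd_auxInt n s l (hv.mul_left t.z) hy _
  rw [logVal_pow, Nat.cast_sub hsl] at hmin
  exact hmin

/-- Closeness of two solutions: the conditions under which the primes of `S` divide the auxiliary
integer formed from them to a high power. The congruence modulo `n * p` ensures that
`t.z * u.v / (t.v * u.z)` is close to the value at `t.x / t.y` of the `p`-adic binomial series
`(1 + X) ^ (1 / n)`, and not to another `n`th root. -/
structure IsClose (δ : ℝ) (t u : NormalizedSolution S n) : Prop where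
  b_eq : t.b = u.b
  pow_dvd_x_iff : ∀ p ∈ S, (p : ℤ) ^ n ∣ t.x ↔ (p : ℤ) ^ n ∣ u.x
  mul_dvd_sub : ∀ p ∈ S, (n * p : ℤ) ∣ t.z * u.v - t.v * u.z
  dist_profile_le : dist t.profile u.profile ≤ δ

namespace IsClose

variable {t u : NormalizedSolution S n} {δ r : ℝ}

lemma delta_nonneg (h : IsClose δ t u) : 0 ≤ δ :=
  dist_nonneg.trans h.dist_profile_le

lemma abs_logVal_x_div_height_sub_le (h : IsClose δ t u) (hp : p ∈ S) :
    |logVal p t.x / t.height - logVal p u.x / u.height| ≤ δ :=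
  (le_max_left _ _).trans ((dist_le_pi_dist t.profile u.profile ⟨p, hp⟩).trans h.dist_profile_le)

lemma abs_logVal_y_div_height_sub_le (h : IsClose δ t u) (hp : p ∈ S) :
    |logVal p t.y / t.height - logVal p u.y / u.height| ≤ δ :=
  (le_max_right _ _).trans ((dist_le_pi_dist t.profile u.profile ⟨p, hp⟩).trans h.dist_profile_le)

lemma log_y_le (h : IsClose δ t u) (ht : 0 < t.height) (hu : 0 < u.height)
    (hr : u.height ≤ r * t.height) :
    Real.log u.y ≤ r * (Real.log t.y + δ * #S * t.height) := by
  rw [← u.isSUnit_y.sum_logVal, ← t.isSUnit_y.sum_logVal]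
  calc _ ≤ ∑ p ∈ S, r * (logVal p t.y + δ * t.height) := sum_le_sum fun p hp ↦
        le_mul_add_mul_of_abs_div_sub_div_le (logVal_nonneg p t.y) ht hu hr
          (h.abs_logVal_y_div_height_sub_le hp)
    _ = _ := by
        rw [← mul_sum, sum_add_distrib, sum_const, nsmul_eq_mul]
        ring

lemma min_logVal_le_of_pow_dvd (h : IsClose δ t u) (hn : n ≠ 0) (hsl : s ≤ l) (hp : p.Prime)
    (hpS : p ∈ S) (hE : auxInt n s l t.x t.y (t.z * u.v) (t.v * u.z) ≠ 0)
    (hx : (p : ℤ) ^ n ∣ t.x) :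
    min (logVal p u.x) ((s + l + 1) * logVal p t.x) ≤
      logVal p (auxInt n s l t.x t.y (t.z * u.v) (t.v * u.z)) := by
  have : Fact p.Prime := ⟨hp⟩
  have hx₂ := (h.pow_dvd_x_iff p hpS).1 hx
  have hmin := min_logVal_le hp u.isSUnit_x.1 (pow_ne_zero (s + l + 1) t.isSUnit_x.1) hE
    fun e he₂ he₁ ↦ pow_dvd_auxInt hn hsl h.b_eq (t.not_dvd_y_of_pow_dvd_x hp hn hx)
      (u.not_dvd_y_of_pow_dvd_x hp hn hx₂) ((dvd_pow_self _ hn).trans hx₂) (h.mul_dvd_sub p hpS)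
      he₁ he₂
  rw [logVal_pow] at hmin
  exact_mod_cast hmin

lemma mul_le_logVal_auxInt_of_pow_dvd (h : IsClose δ t u) (hn : n ≠ 0) (hsl : 3 * s ≤ l)
    (hp : p.Prime) (hpS : p ∈ S) (hE : auxInt n s l t.x t.y (t.z * u.v) (t.v * u.z) ≠ 0)
    (ht : 0 < t.height) (hu : 0 < u.height) (hr : 4 * s * t.height ≤ u.height)
    (hx : (p : ℤ) ^ n ∣ t.x) :
    4 * s * (logVal p t.x + logVal p t.y / n - δ * t.height) ≤
      logVal p (auxInt n s l t.x t.y (t.z * u.v) (t.v * u.z)) := by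
  have hsl' : (3 * s : ℝ) ≤ l := by exact_mod_cast hsl
  have hscale := mul_sub_mul_le_of_abs_div_sub_div_le (logVal_nonneg p u.x) ht hu
    (by positivity : (0 : ℝ) ≤ 4 * s) hr (h.abs_logVal_x_div_height_sub_le hpS)
  have hδ := h.delta_nonneg
  rw [logVal_eq_zero_of_not_dvd (t.not_dvd_y_of_pow_dvd_x hp hn hx), zero_div, add_zero]
  refine (le_min hscale ?_).trans (h.min_logVal_le_of_pow_dvd hn (by omega) hp hpS hE hx)
  calc 4 * s * (logVal p t.x - δ * t.height) ≤ 4 * s * logVal p t.x := by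
        gcongr
        exact sub_le_self _ (by positivity)
    _ ≤ (s + l + 1) * logVal p t.x := by
        gcongr
        · exact logVal_nonneg p t.x
        · linarith

lemma mul_le_logVal_auxInt_of_not_pow_dvd (h : IsClose δ t u) (hn : 2 ≤ n) (hs : 1 ≤ s)
    (hsl : 3 * s ≤ l) (hp : p.Prime) (hpS : p ∈ S)
    (hE : auxInt n s l t.x t.y (t.z * u.v) (t.v * u.z) ≠ 0) (ht : 0 < t.height)
    (hu : 0 < u.height) (hr : 4 * s * t.height ≤ u.height) (hx : ¬ (p : ℤ) ^ n ∣ t.x) :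
    4 * s * (logVal p t.x + logVal p t.y / n - 2 * (n * Real.log p) - δ * t.height) ≤
      logVal p (auxInt n s l t.x t.y (t.z * u.v) (t.v * u.z)) := by
  have hn' : (2 : ℝ) ≤ n := by exact_mod_cast hn
  have hs' : (1 : ℝ) ≤ s := by exact_mod_cast hs
  have hsl' : (3 * s : ℝ) ≤ l := by exact_mod_cast hsl
  have hδ := h.delta_nonneg
  have hlog := Real.log_natCast_nonneg p
  have hx' := logVal_le_mul_log hp t.isSUnit_x.1 hx
  have hy := logVal_nonneg p t.y
  have hle : 4 * s * (logVal p t.x + logVal p t.y / n - 2 * (n * Real.log p) - δ * t.height) ≤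
      4 * s * ((logVal p t.y - δ * t.height) / n) - Real.log p := by
    have hδn : δ * t.height / n ≤ δ * t.height := div_le_self (by positivity) (by linarith)
    have hlogn : Real.log p ≤ 4 * s * (n * Real.log p) := by
      rw [← mul_assoc]
      exact le_mul_of_one_le_left hlog (by nlinarith)
    have : 4 * s * (logVal p t.x + δ * t.height / n) ≤ 4 * s * (n * Real.log p + δ * t.height) := by
      gcongr
    rw [sub_div]
    linarith
  refine hle.trans ((le_min ?_ ?_).trans (min_logVal_v_le t u (by omega) (by omega) hp hE))
  · have hscale := mul_sub_mul_le_of_abs_div_sub_div_le (logVal_nonneg p u.y) ht hu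
      (by positivity : (0 : ℝ) ≤ 4 * s) hr (h.abs_logVal_y_div_height_sub_le hpS)
    rw [sub_le_iff_le_add, ← mul_div_assoc, div_le_iff₀' (by positivity)]
    exact hscale.trans (u.logVal_y_le hp (by omega))
  · have hyn : (logVal p t.y - δ * t.height) / n ≤ logVal p t.y / 2 := by
      gcongr
      exact sub_le_self _ (by positivity)
    calc 4 * s * ((logVal p t.y - δ * t.height) / n) - Real.log p
        ≤ 4 * s * (logVal p t.y / 2) := (sub_le_self _ hlog).trans (by gcongr)
      _ = 2 * s * logVal p t.y := by ring
      _ ≤ (l - s) * logVal p t.y := by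
          gcongr
          linarith

lemma mul_le_log_auxInt (h : IsClose δ t u) (hS : ∀ p ∈ S, p.Prime) (hn : 2 ≤ n) (hs : 1 ≤ s)
    (hsl : 3 * s ≤ l) (hE : auxInt n s l t.x t.y (t.z * u.v) (t.v * u.z) ≠ 0)
    (ht : 0 < t.height) (hu : 0 < u.height) (hr : 4 * s * t.height ≤ u.height) :
    4 * s * (t.height + Real.log t.y / n - 2 * (n * ∑ p ∈ S, Real.log p) - δ * #S * t.height) ≤
      Real.log (auxInt n s l t.x t.y (t.z * u.v) (t.v * u.z)) := by
  refine le_trans ?_ (sum_logVal_le_log S hE)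
  calc _ = ∑ p ∈ S, 4 * s *
        (logVal p t.x + logVal p t.y / n - 2 * (n * Real.log p) - δ * t.height) := by
        rw [height, ← t.isSUnit_x.sum_logVal, ← t.isSUnit_y.sum_logVal]
        simp only [← mul_sum, sum_sub_distrib, sum_add_distrib, sum_div, sum_const, nsmul_eq_mul]
        ring
    _ ≤ _ := sum_le_sum fun p hp ↦ ?_
  by_cases hx : (p : ℤ) ^ n ∣ t.x
  · refine le_trans ?_
      (h.mul_le_logVal_auxInt_of_pow_dvd (by omega) hsl (hS p hp) hp hE ht hu hr hx)
    gcongr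
    exact sub_le_self _ (by positivity)
  · exact h.mul_le_logVal_auxInt_of_not_pow_dvd hn hs hsl (hS p hp) hp hE ht hu hr hx

lemma add_log_v_le (h : IsClose δ t u) (hn : 2 ≤ n) (hls : l ≤ 3 * s + 1) (ht : 0 < t.height)
    (hu : 0 < u.height) (hr : u.height ≤ 4 * (s + 1) * t.height) :
    l * t.height + (Real.log t.z + Real.log u.v) ≤
      3 * s * t.height + 4 * s * (Real.log t.y / n) + 7 / 2 * t.height + 1 / 2 +
        2 * (s + 1) * (δ * #S * t.height) := by
  have hn' : (2 : ℝ) ≤ n := by exact_mod_cast hn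
  have hls' : (l : ℝ) ≤ 3 * s + 1 := by exact_mod_cast hls
  have hδ := h.delta_nonneg
  have hl : l * t.height ≤ (3 * s + 1) * t.height := by gcongr
  have hz : Real.log t.z ≤ (t.height + 1) / 2 :=
    ((le_div_iff₀' (by positivity)).2 t.mul_log_z_le).trans (by gcongr)
  have hy : Real.log t.y / n ≤ t.height / 2 := div_le_div₀ ht.le t.log_y_le_height two_pos hn'
  have hv : Real.log u.v ≤
      4 * (s + 1) * (Real.log t.y / n) + 4 * (s + 1) * (δ * #S * t.height / 2) :=
    calc Real.log u.v ≤ 4 * (s + 1) * (Real.log t.y + δ * #S * t.height) / n :=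
          (le_div_iff₀' (by positivity)).2
            ((u.mul_log_v_le (by omega)).trans (h.log_y_le ht hu hr))
      _ = 4 * (s + 1) * (Real.log t.y / n) + 4 * (s + 1) * (δ * #S * t.height / n) := by ring
      _ ≤ _ := by gcongr
  linarith

lemma add_log_z_le (h : IsClose δ t u) (hn : 2 ≤ n) (hls : l ≤ 3 * s + 1) (ht : 0 < t.height)
    (hr : u.height ≤ 4 * (s + 1) * t.height) :
    s * t.height + (l - s) * Real.log t.y + (Real.log t.v + Real.log u.z) ≤
      3 * s * t.height + 4 * s * (Real.log t.y / n) + 7 / 2 * t.height + 1 / 2 +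
        2 * (s + 1) * (δ * #S * t.height) := by
  have hn' : (2 : ℝ) ≤ n := by exact_mod_cast hn
  have hls' : (l - s : ℝ) ≤ 2 * s + 1 := by
    have : (l : ℝ) ≤ 3 * s + 1 := by exact_mod_cast hls
    linarith
  have hδ := h.delta_nonneg
  have hy := t.log_y_le_height
  have hl : (l - s) * Real.log t.y ≤ (2 * s + 1) * Real.log t.y := by gcongr
  have hv : Real.log t.v ≤ t.height / 2 :=
    ((le_div_iff₀' (by positivity)).2 (t.mul_log_v_le (by omega))).trans
      (div_le_div₀ ht.le hy two_pos hn')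
  have hz : Real.log u.z ≤ 4 * s * (t.height / n) + (4 * t.height + 1) / 2 :=
    calc Real.log u.z ≤ (4 * (s + 1) * t.height + 1) / n :=
          (le_div_iff₀' (by positivity)).2 (u.mul_log_z_le.trans (by gcongr))
      _ = 4 * s * (t.height / n) + (4 * t.height + 1) / n := by ring
      _ ≤ _ := by gcongr
  have hgap : 4 * s * ((t.height - Real.log t.y) / n) ≤
      4 * s * ((t.height - Real.log t.y) / 2) := by
    have := sub_nonneg.2 hy
    gcongr
  have hnonneg : 0 ≤ 2 * (s + 1) * (δ * #S * t.height) := by positivity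
  rw [sub_div] at hgap
  linarith

lemma log_auxInt_le_of_height_le (h : IsClose δ t u) (hn : 2 ≤ n) (hs : 2 ≤ s) (hsl : s ≤ l)
    (hls : l ≤ 3 * s + 1) (hE : auxInt n s l t.x t.y (t.z * u.v) (t.v * u.z) ≠ 0)
    (ht : 0 < t.height) (hu : 0 < u.height) (hr : u.height ≤ 4 * (s + 1) * t.height) :
    Real.log (auxInt n s l t.x t.y (t.z * u.v) (t.v * u.z)) ≤
      5 * s * Real.log (16 * n ^ 3) + (3 * s * t.height + 4 * s * (Real.log t.y / n) +
        7 / 2 * t.height + 1 / 2 + 2 * (s + 1) * (δ * #S * t.height)) := by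
  have hz (w : NormalizedSolution S n) : (w.z : ℝ) ≠ 0 := by exact_mod_cast w.z_ne_zero
  have hv (w : NormalizedSolution S n) : (w.v : ℝ) ≠ 0 := by
    exact_mod_cast w.v_ne_zero (by omega)
  have hdeg : (s + l + 1 : ℝ) ≤ 5 * s := by exact_mod_cast (by omega : s + l + 1 ≤ 5 * s)
  have hlog : 0 ≤ Real.log (16 * n ^ 3) := by exact_mod_cast Real.log_natCast_nonneg (16 * n ^ 3)
  refine (log_auxInt_le (by omega) hsl t.abs_y_le_abs_x t.isSUnit_x.1 t.isSUnit_y.1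
    (mul_ne_zero t.z_ne_zero (u.v_ne_zero (by omega)))
    (mul_ne_zero (t.v_ne_zero (by omega)) u.z_ne_zero) hE ?_ ?_).trans (by gcongr)
  · rw [Int.cast_mul, Real.log_mul (hz t) (hv u)]
    exact h.add_log_v_le hn hls ht hu hr
  · rw [Int.cast_mul, Real.log_mul (hv t) (hz u)]
    exact h.add_log_z_le hn hls ht hr

/- For `s` with `u.height ≈ 4 * s * t.height`, the lower bound for the logarithm of the auxiliary
integer of degrees `s` and about `3 * s` has main term `4 * s * (t.height + log |t.y| / n)`, the
upper bound `s * (3 * t.height + 4 * log |t.y| / n)`. -/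
theorem height_le (h : IsClose δ t u) (hS : ∀ p ∈ S, p.Prime) (hn : 2 ≤ n)
    (hδ : δ * #S ≤ 1 / 100) (ht : 0 < t.height) (htu : 80 * t.height ≤ u.height) :
    t.height ≤ 2 * (5 * Real.log (16 * n ^ 3) + 8 * (n * ∑ p ∈ S, Real.log p) + 1) := by
  have hu : 0 < u.height := by linarith
  obtain ⟨s, hs, hsu, hus⟩ := exists_nat_ge_mul_le_and_le_mul (N := 20)
    (by positivity : 0 < 4 * t.height) (by push_cast; linarith)
  rw [← mul_assoc, mul_comm _ 4] at hsu hus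
  obtain ⟨l, hsl, hls, hE⟩ : ∃ l, 3 * s ≤ l ∧ l ≤ 3 * s + 1 ∧
      auxInt n s l t.x t.y (t.z * u.v) (t.v * u.z) ≠ 0 := by
    obtain hE | hE := auxInt_ne_zero_or_auxInt_succ_ne_zero hn (by omega : s ≤ 3 * s)
      t.isSUnit_x.1 t.isSUnit_y.1 (t.z * u.v) (mul_ne_zero (t.v_ne_zero (by omega)) u.z_ne_zero)
    · exact ⟨3 * s, le_rfl, by omega, hE⟩
    · exact ⟨3 * s + 1, by omega, le_rfl, hE⟩
  have hlower := h.mul_le_log_auxInt hS hn (by omega) hsl hE ht hu hsu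
  have hupper := h.log_auxInt_le_of_height_le hn (by omega) (by omega) hls hE ht hu hus
  have hs' : (20 : ℝ) ≤ s := by exact_mod_cast hs
  have hε : s * (δ * #S * t.height) ≤ s * (1 / 100 * t.height) := by gcongr
  have hε' : δ * #S * t.height ≤ 1 / 100 * t.height := by gcongr
  refine le_of_mul_le_mul_left ?_ (by linarith : (0 : ℝ) < s)
  linarith

end IsClose

lemma exists_infinite_forall_isClose [Infinite (NormalizedSolution S n)]
    (hS : ∀ p ∈ S, p.Prime) (hn : n ≠ 0) {δ : ℝ} (hδ : 0 < δ) :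
    ∃ A : Set (NormalizedSolution S n), A.Infinite ∧ ∀ t ∈ A, ∀ u ∈ A, IsClose δ t u := by
  set m := n * ∏ p ∈ S, p
  have : NeZero m := ⟨mul_ne_zero hn (prod_ne_zero_iff.2 fun p hp ↦ (hS p hp).ne_zero)⟩
  set M : ℤ := ((∏ p ∈ S, p ^ n : ℕ) : ℤ)
  have hb (t : NormalizedSolution S n) : t.b ∈ Set.Icc (-M) M := by
    rw [Set.mem_Icc, ← abs_le, Int.abs_eq_natAbs]
    exact Nat.cast_le.2 (t.nthPowerFree_b.natAbs_le hS t.isSUnit_b)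
  let key (t : NormalizedSolution S n) : Set.Icc (-M) M × Set S × ZMod m × ZMod m :=
    (⟨t.b, hb t⟩, {p | (p : ℤ) ^ n ∣ t.x}, t.z, t.v)
  obtain ⟨c, hc⟩ := Finite.exists_infinite_fiber key
  obtain ⟨A, hAc, hA, hdist⟩ := exists_infinite_subset_forall_dist_le (Set.infinite_coe_iff.1 hc)
    (isCompact_Icc.totallyBounded) profile_mem_Icc hδ
  refine ⟨A, hA, fun t ht u hu ↦ ?_⟩
  have hkey : key t = key u := (hAc ht).trans (hAc hu).symm
  simp only [key, Prod.mk.injEq, Subtype.mk.injEq] at hkey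
  obtain ⟨hbtu, hxtu, hztu, hvtu⟩ := hkey
  refine ⟨hbtu, fun p hp ↦ Set.ext_iff.1 hxtu ⟨p, hp⟩, fun p hp ↦ ?_, hdist t ht u hu⟩
  have hdvd : (n * p : ℤ) ∣ m := by
    exact_mod_cast Nat.mul_dvd_mul_left n (dvd_prod_of_mem (fun p ↦ p) hp)
  refine hdvd.trans ((ZMod.intCast_zmod_eq_zero_iff_dvd _ m).1 ?_)
  push_cast
  rw [hztu, hvtu]
  ring

lemma abs_coordinates_le (t : NormalizedSolution S n) (hn : n ≠ 0) (i : Fin 5) :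
    |![t.x, t.y, t.z, t.b, t.v] i| ≤ 2 * |t.x| := by
  have hx := abs_nonneg t.x
  have hyx := t.abs_y_le_abs_x
  have hz : |t.z| ≤ 2 * |t.x| :=
    (le_self_pow₀ (Int.one_le_abs t.z_ne_zero) hn).trans t.abs_z_pow_le
  have hb : |t.b| ≤ |t.y| :=
    Int.le_of_dvd (abs_pos.2 t.isSUnit_y.1) ((abs_dvd_abs _ _).2 ⟨_, t.y_eq_mul_pow⟩)
  have hv : |t.v| ≤ |t.y| :=
    Int.le_of_dvd (abs_pos.2 t.isSUnit_y.1) ((abs_dvd_abs _ _).2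
      ((dvd_pow_self _ hn).trans (Dvd.intro_left _ t.y_eq_mul_pow.symm)))
  fin_cases i <;> simp <;> linarith

lemma finite_setOf_height_le (hn : n ≠ 0) (B : ℝ) :
    {t : NormalizedSolution S n | t.height ≤ B}.Finite := by
  set M : ℤ := 2 * ⌊Real.exp B⌋
  let coords (t : NormalizedSolution S n) : Fin 5 → ℤ := ![t.x, t.y, t.z, t.b, t.v]
  have hinj : Function.Injective coords := fun t u h ↦
    NormalizedSolution.ext (congrFun h 0) (congrFun h 1) (congrFun h 2) (congrFun h 3)
      (congrFun h 4)
  refine ((Set.finite_Icc (fun _ ↦ -M) (fun _ ↦ M)).preimage hinj.injOn).subset fun t ht ↦ ?_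
  have hx : |t.x| ≤ ⌊Real.exp B⌋ := by
    have hx₀ : (t.x : ℝ) ≠ 0 := by exact_mod_cast t.isSUnit_x.1
    rw [Set.mem_ofPred_eq, height, ← Real.log_abs, Real.log_le_iff_le_exp (by positivity)] at ht
    rw [Int.le_floor]
    exact_mod_cast ht
  have hM (i : Fin 5) : |coords t i| ≤ M := (t.abs_coordinates_le hn i).trans (by omega)
  exact ⟨fun i ↦ (abs_le.1 (hM i)).1, fun i ↦ (abs_le.1 (hM i)).2⟩

lemma exists_mem_lt_height (hn : n ≠ 0) {A : Set (NormalizedSolution S n)} (hA : A.Infinite)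
    (B : ℝ) : ∃ t ∈ A, B < t.height := by
  obtain ⟨t, ht, htB⟩ := hA.exists_notMem_finite (finite_setOf_height_le hn B)
  exact ⟨t, ht, not_le.1 htB⟩

theorem finite (hS : ∀ p ∈ S, p.Prime) (hn : 2 ≤ n) : Finite (NormalizedSolution S n) := by
  by_contra hinf
  rw [not_finite_iff_infinite] at hinf
  have hδ : (1 / 100 : ℝ) / (#S + 1) * #S ≤ 1 / 100 := by
    rw [div_mul_eq_mul_div]
    exact div_le_of_le_mul₀ (by positivity) (by positivity) (by linarith)
  obtain ⟨A, hA, hclose⟩ := exists_infinite_forall_isClose hS (by omega : n ≠ 0)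
    (by positivity : (0 : ℝ) < 1 / 100 / (#S + 1))
  obtain ⟨t, htA, ht⟩ := exists_mem_lt_height (by omega) hA
    (max 0 (2 * (5 * Real.log (16 * n ^ 3) + 8 * (n * ∑ p ∈ S, Real.log p) + 1)))
  obtain ⟨u, huA, hu⟩ := exists_mem_lt_height (by omega) hA (80 * t.height)
  rw [max_lt_iff] at ht
  exact ht.2.not_ge ((hclose t htA u huA).height_le hS hn hδ ht.1 hu.le)

lemma exists_of_add_eq_pow (hn : n ≠ 0) {x y z : ℤ} (hx : IsSUnit S x) (hy : IsSUnit S y)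
    (hz : z ≠ 0) (hfree : NthPowerFree n (Int.gcd x y)) (h : x + y = z ^ n) (hyx : |y| ≤ |x|) :
    ∃ t : NormalizedSolution S n, t.x = x ∧ t.y = y ∧ t.z = z := by
  obtain ⟨b, v, hbv, hb⟩ := exists_eq_mul_pow_nthPowerFree hn hy.1
  exact ⟨⟨x, y, z, b, v, hx, hy, hz, hfree, h, hyx, hbv, hb⟩, rfl, rfl, rfl⟩

end NormalizedSolution

theorem finitely_many_solutions_fixed_exponent
    (S : Finset ℕ) (hS : ∀ p ∈ S, p.Prime) (n : ℕ) (hn : 2 ≤ n) :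
    {t : ℤ × ℤ × ℤ | IsSUnit S t.1 ∧ IsSUnit S t.2.1 ∧ t.2.2 ≠ 0 ∧
      NthPowerFree n (Int.gcd t.1 t.2.1) ∧
      t.1 + t.2.1 = t.2.2 ^ n}.Finite := by
  have := NormalizedSolution.finite hS hn
  refine ((Set.finite_range fun t : NormalizedSolution S n ↦ (t.x, t.y, t.z)).union
    (Set.finite_range fun t : NormalizedSolution S n ↦ (t.y, t.x, t.z))).subset ?_
  rintro ⟨x, y, z⟩ ⟨hx, hy, hz, hfree, heq⟩
  have hn₀ : n ≠ 0 := by omega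
  obtain hyx | hxy := le_total |y| |x|
  · obtain ⟨t, rfl, rfl, rfl⟩ := NormalizedSolution.exists_of_add_eq_pow hn₀ hx hy hz hfree heq hyx
    exact Or.inl ⟨t, rfl⟩
  · obtain ⟨t, rfl, rfl, rfl⟩ := NormalizedSolution.exists_of_add_eq_pow hn₀ hy hx hz
      (Int.gcd_comm x y ▸ hfree) (add_comm x y ▸ heq) hxy
    exact Or.inr ⟨t, rfl⟩
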